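/- arXiv:1907.02150 — 2 statements merged into one kernel-verified Lean document; each statement's English description precedes it below -/
import Mathlib

section
/- Let 0 → B → C → D → 0 be a short exact sequence of R-modules and A an R-module. If J = Ann_R(Ext^1_R(D,A)), then J·tr_B(A) + tr_D(A) ⊆ tr_C(A). -/
/-- The trace of `A` with respect to `B`: the submodule of `A` generated by the images
of all `R`-linear maps `B → A`. -/
def trace (R : Type) [CommRing R] (B A : Type) [AddCommGroup B] [Module R B]
    [AddCommGroup A] [Module R A] : Submodule R A :=
  ⨆ φ : B →ₗ[R] A, LinearMap.range φ

/-- `B` generates `D` if some direct sum of copies of `B` surjects onto `D`. -/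
def Generates (R : Type) [CommRing R] (B D : Type) [AddCommGroup B] [Module R B]
    [AddCommGroup D] [Module R D] : Prop :=
  ∃ (S : Type) (f : (S →₀ B) →ₗ[R] D), Function.Surjective f

open CategoryTheory

/-!
For `φ : B → A`, pushing the extension `0 → B → C → D → 0` out along `φ` gives a class in
`Ext¹(D, A)`, which vanishes exactly when `φ` extends to `C`. An element `r` of the annihilator
kills that class, so `r • φ` extends to `C` and `r • φ(B)` lies in the trace of `C`.
The statement uses `Ext` as a derived functor, whereas the long exact sequence is
available for `Abelian.Ext`; both are computed by the cocycles of a projective resolution.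
-/

universe w v u t

section Ext

variable {R : Type t} [Ring R]

lemma smul_mem_range_of_mem_annihilator_homology (S : ShortComplex (ModuleCat.{v} R)) {r : R}
    (hr : r ∈ Module.annihilator R S.homology) {x : S.X₂} (hx : S.g x = 0) :
    r • x ∈ LinearMap.range S.f.hom := by
  let z : S.cycles := S.moduleCatCyclesIso.inv (⟨x, hx⟩ : LinearMap.ker S.g.hom)
  have hz : S.iCycles z = x := S.moduleCatCyclesIso_inv_iCycles_apply _
  have hrz : S.homologyπ (r • z) = 0 := by
    rw [map_smul, Module.mem_annihilator.mp hr]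
  rw [← S.moduleCat_pOpcycles_eq_zero_iff, ← hz, ← map_smul]
  calc S.pOpcycles (S.iCycles (r • z)) = S.homologyι (S.homologyπ (r • z)) :=
        (ConcreteCategory.congr_hom S.homology_π_ι (r • z)).symm
    _ = 0 := by rw [hrz, map_zero]

variable {C : Type u} [Category.{v} C] [Abelian C] [Linear R C]

lemma exists_d_comp_eq_smul_of_mem_annihilator_ext [EnoughProjectives C] {X Y : C}
    (P : ProjectiveResolution X) {n : ℕ} {r : R}
    (hr : r ∈ Module.annihilator R (((Ext R C (n + 1)).obj (.op X)).obj Y))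
    (x : P.complex.X (n + 1) ⟶ Y) (hx : P.complex.d (n + 2) (n + 1) ≫ x = 0) :
    ∃ y : P.complex.X n ⟶ Y, P.complex.d (n + 1) n ≫ y = r • x := by
  let K := P.complex.linearYonedaObj R Y
  let e : ((Ext R C (n + 1)).obj (.op X)).obj Y ≅ (K.sc' n (n + 1) (n + 2)).homology :=
    P.isoExt (n + 1) Y ≪≫ K.homologyIsoSc' n (n + 1) (n + 2) (by simp) (by simp)
  rw [e.toLinearEquiv.annihilator_eq] at hr
  exact smul_mem_range_of_mem_annihilator_homology (K.sc' n (n + 1) (n + 2)) hr hx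

lemma smul_extMk [HasExt.{w} C] {X Y : C} (P : ProjectiveResolution X) {n m : ℕ}
    (x : P.complex.X n ⟶ Y) (hm : n + 1 = m) (hx : P.complex.d m n ≫ x = 0) (r : R) :
    r • P.extMk x m hm hx = P.extMk (r • x) m hm (by simp [hx]) := by
  simp [Abelian.Ext.smul_eq_comp_mk₀, P.extMk_comp_mk₀]

lemma smul_eq_zero_of_mem_annihilator_ext [EnoughProjectives C] [HasExt.{w} C] {X Y : C} {n : ℕ}
    {r : R} (hr : r ∈ Module.annihilator R (((Ext R C (n + 1)).obj (.op X)).obj Y))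
    (α : Abelian.Ext X Y (n + 1)) : r • α = 0 := by
  let P := ProjectiveResolution.of X
  obtain ⟨x, hx, rfl⟩ := P.extMk_surjective α (n + 2) rfl
  rw [smul_extMk, P.extMk_eq_zero_iff _ _ _ _ n rfl]
  exact exists_d_comp_eq_smul_of_mem_annihilator_ext P hr x hx

lemma exists_f_comp_eq_smul_of_shortExact [HasExt.{w} C]
    {S : ShortComplex C} (hS : S.ShortExact) {Y : C} {r : R}
    (hr : ∀ α : Abelian.Ext S.X₃ Y 1, r • α = 0) (φ : S.X₁ ⟶ Y) :
    ∃ ψ : S.X₂ ⟶ Y, S.f ≫ ψ = r • φ := by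
  have hδ : hS.extClass.comp (Abelian.Ext.mk₀ (r • φ)) (add_zero 1) = 0 := by
    rw [Abelian.Ext.mk₀_smul, Abelian.Ext.comp_smul, hr]
  obtain ⟨ψ, hψ⟩ := Abelian.Ext.contravariant_sequence_exact₁ hS Y _ (add_zero 1) hδ
  obtain ⟨ψ, rfl⟩ := (Abelian.Ext.mk₀_bijective _ _).surjective ψ
  rw [Abelian.Ext.mk₀_comp_mk₀] at hψ
  exact ⟨ψ, (Abelian.Ext.mk₀_bijective _ _).injective hψ⟩

end Ext

lemma exists_comp_eq_smul_of_mem_annihilator_ext {R : Type u} [CommRing R] [Small.{v} R]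
    {A B C D : Type v} [AddCommGroup A] [Module R A] [AddCommGroup B] [Module R B]
    [AddCommGroup C] [Module R C] [AddCommGroup D] [Module R D]
    {f : B →ₗ[R] C} {g : C →ₗ[R] D} (hf : Function.Injective f) (hfg : Function.Exact f g)
    (hg : Function.Surjective g) {r : R}
    (hr : r ∈ Module.annihilator R
      (((Ext R (ModuleCat.{v} R) 1).obj (.op (.of R D))).obj (.of R A)))
    (φ : B →ₗ[R] A) : ∃ ψ : C →ₗ[R] A, ψ ∘ₗ f = r • φ := by
  let S := ModuleCat.shortComplexOfCompEqZero f g hfg.linearMap_comp_eq_zero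
  have hS : S.ShortExact := ModuleCat.shortComplex_shortExact S hfg hf hg
  obtain ⟨ψ, hψ⟩ := exists_f_comp_eq_smul_of_shortExact hS
    (smul_eq_zero_of_mem_annihilator_ext hr) (ModuleCat.ofHom φ)
  exact ⟨ψ.hom, ModuleCat.hom_ext_iff.mp hψ⟩

section Trace

variable {R : Type} [CommRing R] {A B C : Type} [AddCommGroup A] [Module R A]
  [AddCommGroup B] [Module R B] [AddCommGroup C] [Module R C]

lemma range_le_trace (φ : B →ₗ[R] A) : LinearMap.range φ ≤ trace R B A :=
  le_iSup (fun φ : B →ₗ[R] A ↦ LinearMap.range φ) φ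

lemma trace_le_trace_of_surjective {g : C →ₗ[R] B} (hg : Function.Surjective g) :
    trace R B A ≤ trace R C A :=
  iSup_le fun φ ↦ by
    rw [← LinearMap.range_comp_of_range_eq_top φ (LinearMap.range_eq_top.mpr hg)]
    exact range_le_trace (φ ∘ₗ g)

lemma smul_trace_le_trace {J : Ideal R} {f : B →ₗ[R] C}
    (hJ : ∀ r ∈ J, ∀ φ : B →ₗ[R] A, ∃ ψ : C →ₗ[R] A, ψ ∘ₗ f = r • φ) :
    J • trace R B A ≤ trace R C A := by
  rw [trace, Submodule.smul_iSup, iSup_le_iff]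
  refine fun φ ↦ Submodule.smul_le.mpr ?_
  rintro r hr _ ⟨b, rfl⟩
  obtain ⟨ψ, hψ⟩ := hJ r hr φ
  exact range_le_trace ψ ⟨f b, LinearMap.congr_fun hψ b⟩

end Trace

/-- For a short exact sequence `0 → B → C → D → 0` and an `R`-module `A`,
if `J = Ann_R(Ext¹_R(D,A))`, then `J·tr_B(A) + tr_D(A) ⊆ tr_C(A)`. -/
theorem stmt_14 (R : Type) [CommRing R] (A B C D : Type)
    [AddCommGroup A] [Module R A] [AddCommGroup B] [Module R B]
    [AddCommGroup C] [Module R C] [AddCommGroup D] [Module R D]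
    (f : B →ₗ[R] C) (g : C →ₗ[R] D)
    (hf : Function.Injective f) (hg : Function.Surjective g)
    (hfg : LinearMap.range f = LinearMap.ker g)
    (J : Ideal R)
    (hJ : J = Module.annihilator R
      (((Ext R (ModuleCat R) 1).obj (Opposite.op (ModuleCat.of R D))).obj (ModuleCat.of R A))) :
    J • trace R B A ⊔ trace R D A ≤ trace R C A := by
  subst hJ
  have hexact : Function.Exact f g := LinearMap.exact_iff.mpr hfg.symm
  exact sup_le
    (smul_trace_le_trace fun _ hr ↦ exists_comp_eq_smul_of_mem_annihilator_ext hf hexact hg hr)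
    (trace_le_trace_of_surjective hg)
end

section
/- Let (R,m) be an Artinian local ring. Then the intersection of tr_B(R) over all R-modules B with B ≠ mB, together with the fact that tr_{R/m}(R) ⊆ soc(R), gives: ⋂_B tr_B(R) = soc(R), where B ranges over nonzero finitely generated R-modules. In particular, the image of any R-linear map R/m → R lies in soc(R), so tr_{R/m}(R) ⊆ soc(R). -/
/-! The trace `tr_B(A)` can only grow when `B` is replaced by a module that generates it, and
`tr_{R/I}(A)` is the submodule of elements of `A` killed by `I`. If `I` is maximal and `I B ≠ B`,
then `B / I B` is a nonzero vector space over `R / I`, so `B` generates `R / I`. Over a local ring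
with maximal ideal `m`, Nakayama's lemma therefore makes `tr_{R/m}(A) = (0 :_A m)` the smallest
of the traces of nonzero finitely generated modules. -/

section Trace

variable {R B A : Type} [CommRing R] [AddCommGroup B] [Module R B] [AddCommGroup A] [Module R A]

theorem apply_mem_trace (φ : B →ₗ[R] A) (b : B) : φ b ∈ trace R B A :=
  Submodule.mem_iSup_of_mem φ (φ.mem_range_self b)

theorem trace_le_iff {N : Submodule R A} :
    trace R B A ≤ N ↔ ∀ (φ : B →ₗ[R] A) (b : B), φ b ∈ N := by
  simp only [trace, iSup_le_iff, LinearMap.range_le_iff_comap, Submodule.eq_top_iff',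
    Submodule.mem_comap]

variable (A) in
theorem trace_quotient_eq_torsionBySet (I : Ideal R) :
    trace R (R ⧸ I) A = Submodule.torsionBySet R A I := by
  apply le_antisymm
  · have hI : Module.IsTorsionBySet R (R ⧸ I) I :=
      (Module.isTorsionBySet_quotient_iff I I).mpr fun x _ hr => I.mul_mem_right x hr
    refine trace_le_iff.mpr fun φ y => (Submodule.mem_torsionBySet_iff _ _).mpr fun r => ?_
    rw [← map_smul, @hI y r, map_zero]
  · intro x hx
    have le_ker : I ≤ LinearMap.ker (LinearMap.toSpanSingleton R A x) := fun r hr =>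
      (Submodule.mem_torsionBySet_iff _ _).mp hx ⟨r, hr⟩
    have lift_one : Submodule.liftQ I _ le_ker (Submodule.Quotient.mk 1) = x := by
      rw [Submodule.liftQ_apply, LinearMap.toSpanSingleton_apply_one]
    exact lift_one ▸ apply_mem_trace _ _

end Trace

namespace Generates

variable {R B D : Type} [CommRing R] [AddCommGroup B] [Module R B] [AddCommGroup D] [Module R D]

theorem trace_le (h : Generates R B D) (A : Type) [AddCommGroup A] [Module R A] :
    trace R D A ≤ trace R B A := by
  obtain ⟨S, f, hf⟩ := h
  refine trace_le_iff.mpr fun φ d => ?_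
  obtain ⟨s, rfl⟩ := hf d
  induction s using Finsupp.induction_linear with
  | zero => simp only [map_zero, zero_mem]
  | add s t hs ht => simpa only [map_add] using add_mem hs ht
  | single i b => exact apply_mem_trace (φ ∘ₗ f ∘ₗ Finsupp.lsingle i) b

theorem of_surjective {f : B →ₗ[R] D} (hf : Function.Surjective f) : Generates R B D :=
  ⟨Unit, f ∘ₗ Finsupp.lapply (), hf.comp fun b => ⟨Finsupp.single () b, Finsupp.single_eq_same⟩⟩

theorem quotient_of_smul_top_ne_top {I : Ideal R} [I.IsMaximal]
    (h : I • (⊤ : Submodule R B) ≠ ⊤) : Generates R B (R ⧸ I) := by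
  let := Ideal.Quotient.field I
  have : Nontrivial (B ⧸ I • (⊤ : Submodule R B)) := Submodule.Quotient.nontrivial_iff.mpr h
  obtain ⟨v, hv⟩ := exists_ne (0 : B ⧸ I • (⊤ : Submodule R B))
  obtain ⟨g, hgv⟩ := Module.Projective.exists_dual_ne_zero (R ⧸ I) hv
  have hg : Function.Surjective g := LinearMap.surjective (DFunLike.ne_iff.mpr ⟨v, hgv⟩)
  exact of_surjective (f := g.restrictScalars R ∘ₗ Submodule.mkQ _)
    (hg.comp (Submodule.mkQ_surjective _))

theorem quotient_maximalIdeal [IsLocalRing R] [Module.Finite R B] [Nontrivial B] :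
    Generates R B (R ⧸ IsLocalRing.maximalIdeal R) :=
  quotient_of_smul_top_ne_top <| Ne.symm <|
    Submodule.top_ne_ideal_smul_of_le_jacobson_annihilator (IsLocalRing.maximalIdeal_le_jacobson _)

end Generates

theorem bot_colon_eq_torsionBySet {R : Type*} [CommRing R] (s : Set R) :
    (⊥ : Submodule R R).colon s = Submodule.torsionBySet R R s := by
  ext x
  simp only [Submodule.mem_colon, Submodule.mem_torsionBySet_iff, Submodule.mem_bot, smul_eq_mul,
    mul_comm x, Subtype.forall]

theorem stmt_17_general (R A : Type) [CommRing R] [IsLocalRing R] [AddCommGroup A] [Module R A] :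
    (∀ x : A,
        x ∈ Submodule.torsionBySet R A (IsLocalRing.maximalIdeal R) ↔
          ∀ (B : Type) [AddCommGroup B] [Module R B],
            Module.Finite R B → Nontrivial B → x ∈ trace R B A) ∧
      trace R (R ⧸ IsLocalRing.maximalIdeal R) A =
        Submodule.torsionBySet R A (IsLocalRing.maximalIdeal R) := by
  rw [← trace_quotient_eq_torsionBySet]
  refine ⟨fun x => ⟨fun hx B _ _ _ _ => ?_, fun h => ?_⟩, rfl⟩
  · exact Generates.quotient_maximalIdeal.trace_le A hx
  · exact h (R ⧸ IsLocalRing.maximalIdeal R) inferInstance inferInstance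

/-- Over an Artinian local ring `(R,m)`, the intersection of `tr_B(R)` over
all nonzero finitely generated `R`-modules `B` equals `soc(R) = (0 :_R m)`; in particular
`tr_{R/m}(R) ⊆ soc(R)`. -/
theorem stmt_17 (R : Type) [CommRing R] [IsLocalRing R] [IsArtinianRing R] :
    (∀ x : R,
        x ∈ (⊥ : Submodule R R).colon (IsLocalRing.maximalIdeal R) ↔
          ∀ (B : Type) [AddCommGroup B] [Module R B],
            Module.Finite R B → Nontrivial B → x ∈ trace R B R) ∧
      trace R (R ⧸ IsLocalRing.maximalIdeal R) R ≤
        (⊥ : Submodule R R).colon (IsLocalRing.maximalIdeal R) := by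
  rw [bot_colon_eq_torsionBySet]
  exact (stmt_17_general R R).imp_right le_of_eq
end
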